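/- arXiv:2407.13746 — 3 statements merged into one kernel-verified Lean document; each statement's English description precedes it below -/
import Mathlib

section
/- Let l ≥ 1, Y = {−1,+1}^l, p a conditional label distribution on Y, L̄ : Y × Y → [0,1] an arbitrary multi-label loss, and c_{y'} = ∑_{y∈Y} p(y)·L̄(y', y). For a positive probability vector s on Y define the multi-label logistic conditional error G_log(s) = −∑_{y'∈Y} (1 − c_{y'})·log s_{y'}. If ĥ ∈ Y satisfies s_{ĥ} = max_{y'∈Y} s_{y'}, then c_{ĥ} − min_{y'∈Y} c_{y'} ≤ 2·√( G_log(s) − inf_{s'} G_log(s') ), where the infimum is over all positive probability vectors s' on Y. -/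
noncomputable section
open Real

/-- Conditional cost `c_{y'} = ∑_y p(y) L̄(y', y)` of predicting the label vector `y'`. -/
def condCost {l : ℕ} (p : (Fin l → Bool) → ℝ)
    (L : (Fin l → Bool) → (Fin l → Bool) → ℝ) (y' : Fin l → Bool) : ℝ :=
  ∑ y, p y * L y' y

/-- The set of positive probability vectors on `Y = {−1,+1}^l`. -/
def probVecs (l : ℕ) : Set ((Fin l → Bool) → ℝ) :=
  {s | (∀ y', 0 < s y') ∧ ∑ y', s y' = 1}

/-- Multi-label logistic conditional error `G_log(s) = −∑_{y'} (1 − c_{y'}) log s_{y'}`. -/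
def Glog {l : ℕ} (c : (Fin l → Bool) → ℝ) (s : (Fin l → Bool) → ℝ) : ℝ :=
  -∑ y', (1 - c y') * Real.log (s y')

/-!
Let `w = 1 - c`, let `j` be the prediction, `i` a cheapest label, and suppose `i ≠ j`. Averaging
`s i` and `s j` does not increase the error, because `w j ≤ w i` and `s i ≤ s j`. Then splitting the
mass `s i + s j` between `i` and `j` in the proportion `exp y : exp (-y)` lowers the error by
`(w i - w j) * y - (w i + w j) * log (cosh y)`. Since `log (cosh y) ≤ y ^ 2 / 2` and
`w i + w j ≤ 2`, the choice `y = (w i - w j) / 2` shows that the excess error is at least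
`((w i - w j) / 2) ^ 2 = ((c j - c i) / 2) ^ 2`.
-/

section LogInequalities

variable {a b u v m : ℝ}

lemma log_cosh_le_half_sq (y : ℝ) : log (cosh y) ≤ y ^ 2 / 2 :=
  (log_le_iff_le_exp (cosh_pos y)).2 (cosh_le_exp_half_sq y)

lemma log_add_log_le_two_mul_log_midpoint (hu : 0 < u) (hv : 0 < v) :
    log u + log v ≤ 2 * log ((u + v) / 2) := by
  calc log u + log v = log (u * v) := (log_mul hu.ne' hv.ne').symm
    _ ≤ log (((u + v) / 2) ^ 2) := log_le_log (mul_pos hu hv) (by linarith [sq_nonneg (u - v)])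
    _ = 2 * log ((u + v) / 2) := mod_cast log_pow ((u + v) / 2) 2

lemma mul_log_add_mul_log_le_mul_log_midpoint (hba : b ≤ a) (hab : 0 ≤ a + b) (hu : 0 < u)
    (huv : u ≤ v) : a * log u + b * log v ≤ (a + b) * log ((u + v) / 2) := by
  have chebyshev : a * log u + b * log v ≤ (a + b) / 2 * (log u + log v) := by
    linarith [mul_nonneg (sub_nonneg.2 hba) (sub_nonneg.2 (log_le_log hu huv))]
  calc a * log u + b * log v ≤ (a + b) / 2 * (log u + log v) := chebyshev
    _ ≤ (a + b) / 2 * (2 * log ((u + v) / 2)) := by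
      gcongr
      exact log_add_log_le_two_mul_log_midpoint hu (hu.trans_le huv)
    _ = (a + b) * log ((u + v) / 2) := by ring

lemma log_mul_exp_div_cosh (hm : 0 < m) (x y : ℝ) :
    log (m * exp x / cosh y) = log m + x - log (cosh y) := by
  rw [log_div (by positivity) (cosh_pos y).ne', log_mul hm.ne' (exp_ne_zero x), log_exp]

lemma le_mul_log_tilt_add_mul_log_tilt (hab : 0 ≤ a + b) (hm : 0 < m) (y : ℝ) :
    (a + b) * log m + ((a - b) * y - (a + b) * (y ^ 2 / 2)) ≤
      a * log (m * exp y / cosh y) + b * log (m * exp (-y) / cosh y) := by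
  rw [log_mul_exp_div_cosh hm, log_mul_exp_div_cosh hm]
  linarith [mul_le_mul_of_nonneg_left (log_cosh_le_half_sq y) hab]

end LogInequalities

lemma sum_update_update_sub {ι M N : Type*} [Fintype ι] [DecidableEq ι] [AddCommGroup N]
    {i j : ι} (f : ι → M → N) (hij : i ≠ j) (s : ι → M) (x y : M) :
    ∑ k, f k (Function.update (Function.update s i x) j y k) - ∑ k, f k (s k) =
      (f i x - f i (s i)) + (f j y - f j (s j)) := by
  rw [← Finset.sum_sub_distrib, Fintype.sum_eq_add i j hij]
  · simp [hij]
  · rintro k ⟨hki, hkj⟩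
    simp [hki, hkj]

section CrossEntropy

variable {ι : Type*} [Fintype ι]

/-- The relative interior of the standard simplex: the probability vectors on `ι` with positive
entries. On `Fin l → Bool` it is `probVecs l`. -/
def openSimplex (ι : Type*) [Fintype ι] : Set (ι → ℝ) :=
  {s | (∀ i, 0 < s i) ∧ ∑ i, s i = 1}

/-- The cross entropy of a positive vector `s` relative to the weights `w`, which need not sum to
one. The logistic conditional error `Glog c` is the case `w = 1 - c`. -/
def crossEntropy (w s : ι → ℝ) : ℝ :=
  -∑ i, w i * log (s i)

variable {w s : ι → ℝ} {i j : ι}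

lemma openSimplex_subset_stdSimplex : openSimplex ι ⊆ stdSimplex ℝ ι :=
  fun _ hs => ⟨fun i => (hs.1 i).le, hs.2⟩

lemma crossEntropy_nonneg (hw : ∀ i, 0 ≤ w i) (hs : s ∈ openSimplex ι) : 0 ≤ crossEntropy w s :=
  neg_nonneg.2 <| Finset.sum_nonpos fun i _ => mul_nonpos_of_nonneg_of_nonpos (hw i) <|
    log_nonpos (hs.1 i).le (mem_Icc_of_mem_stdSimplex (openSimplex_subset_stdSimplex hs) i).2

lemma bddBelow_crossEntropy_image_openSimplex (hw : ∀ i, 0 ≤ w i) :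
    BddBelow (crossEntropy w '' openSimplex ι) :=
  ⟨0, Set.forall_mem_image.2 fun _ hs => crossEntropy_nonneg hw hs⟩

lemma update_update_mem_openSimplex [DecidableEq ι] (hs : s ∈ openSimplex ι) (hij : i ≠ j)
    {x y : ℝ} (hx : 0 < x) (hy : 0 < y) (hxy : x + y = s i + s j) :
    Function.update (Function.update s i x) j y ∈ openSimplex ι := by
  refine ⟨fun k => ?_, ?_⟩
  · simp only [Function.update_apply]
    split_ifs
    exacts [hy, hx, hs.1 k]
  · linarith [sum_update_update_sub (fun _ t => t) hij s x y, hs.2]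

lemma crossEntropy_sub_crossEntropy_update_update [DecidableEq ι] (hij : i ≠ j) (x y : ℝ) :
    crossEntropy w s - crossEntropy w (Function.update (Function.update s i x) j y) =
      (w i * log x + w j * log y) - (w i * log (s i) + w j * log (s j)) := by
  unfold crossEntropy
  linarith [sum_update_update_sub (fun k t => w k * log t) hij s x y]

lemma exists_le_crossEntropy_sub (hs : s ∈ openSimplex ι) (hij : i ≠ j) (hsij : s i ≤ s j)
    (hw : w j ≤ w i) (hw₀ : 0 ≤ w i + w j) (y : ℝ) :
    ∃ t ∈ openSimplex ι, (w i - w j) * y - (w i + w j) * (y ^ 2 / 2) ≤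
      crossEntropy w s - crossEntropy w t := by
  classical
  have hi : 0 < s i := hs.1 i
  have hj : 0 < s j := hs.1 j
  have hc : 0 < cosh y := cosh_pos y
  set m := (s i + s j) / 2 with hm
  have hm₀ : 0 < m := by positivity
  have mass_preserved : m * exp y / cosh y + m * exp (-y) / cosh y = s i + s j := by
    rw [← add_div, ← mul_add, div_eq_iff hc.ne', cosh_eq, hm]
    ring
  refine ⟨_, update_update_mem_openSimplex hs hij (by positivity) (by positivity) mass_preserved,
    ?_⟩
  rw [crossEntropy_sub_crossEntropy_update_update hij]
  linarith [mul_log_add_mul_log_le_mul_log_midpoint hw hw₀ hi hsij,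
    le_mul_log_tilt_add_mul_log_tilt hw₀ hm₀ y]

lemma sq_half_sub_le_crossEntropy_sub_sInf (hw : ∀ k, w k ∈ Set.Icc 0 1) (hs : s ∈ openSimplex ι)
    (hij : i ≠ j) (hsij : s i ≤ s j) (hwij : w j ≤ w i) :
    ((w i - w j) / 2) ^ 2 ≤ crossEntropy w s - sInf (crossEntropy w '' openSimplex ι) := by
  obtain ⟨t, ht, hst⟩ := exists_le_crossEntropy_sub hs hij hsij hwij
    (add_nonneg (hw i).1 (hw j).1) ((w i - w j) / 2)
  have hinf : sInf (crossEntropy w '' openSimplex ι) ≤ crossEntropy w t :=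
    csInf_le (bddBelow_crossEntropy_image_openSimplex fun k => (hw k).1) ⟨t, ht, rfl⟩
  have hsum : w i + w j ≤ 2 := by linarith [(hw i).2, (hw j).2]
  linarith [mul_le_mul_of_nonneg_right hsum (sq_nonneg ((w i - w j) / 2))]

theorem log_bound_general_general {c : ι → ℝ} (hc : ∀ i, c i ∈ Set.Icc 0 1)
    (hs : s ∈ openSimplex ι) (hmax : ∀ i, s i ≤ s j) :
    c j - ⨅ i, c i ≤
      2 * √(crossEntropy (1 - c) s - sInf (crossEntropy (1 - c) '' openSimplex ι)) := by
  have : Nonempty ι := ⟨j⟩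
  obtain ⟨i, hi⟩ := exists_eq_ciInf_of_finite (f := c)
  rw [← hi]
  obtain rfl | hij := eq_or_ne i j
  · simp
  have hcij : c i ≤ c j := hi ▸ ciInf_le (Set.finite_range c).bddBelow j
  have hw : ∀ k, (1 - c) k ∈ Set.Icc (0 : ℝ) 1 := fun k => Set.Icc.mem_iff_one_sub_mem.1 (hc k)
  have hsq := sq_half_sub_le_crossEntropy_sub_sInf hw hs hij (hmax i) (sub_le_sub_left hcij 1)
  have hsqrt := le_sqrt_of_sq_le hsq
  simp only [Pi.sub_apply, Pi.one_apply] at hsqrt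
  linarith

end CrossEntropy

lemma condCost_mem_Icc {l : ℕ} {p : (Fin l → Bool) → ℝ} (hp0 : ∀ y, 0 ≤ p y)
    (hp1 : ∑ y, p y = 1) {L : (Fin l → Bool) → (Fin l → Bool) → ℝ} {y' : Fin l → Bool}
    (hL : ∀ y, L y' y ∈ Set.Icc (0 : ℝ) 1) : condCost p L y' ∈ Set.Icc (0 : ℝ) 1 :=
  (convex_Icc (0 : ℝ) 1).sum_mem (fun y _ => hp0 y) hp1 fun y _ => hL y

theorem log_bound_general (l : ℕ) (hl : 1 ≤ l)
    (p : (Fin l → Bool) → ℝ) (hp0 : ∀ y, 0 ≤ p y) (hp1 : ∑ y, p y = 1)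
    (L : (Fin l → Bool) → (Fin l → Bool) → ℝ)
    (hL : ∀ y' y, L y' y ∈ Set.Icc (0 : ℝ) 1)
    (s : (Fin l → Bool) → ℝ) (hs : s ∈ probVecs l)
    (hhat : Fin l → Bool) (hmax : ∀ y', s y' ≤ s hhat) :
    condCost p L hhat - ⨅ y' : Fin l → Bool, condCost p L y'
      ≤ 2 * Real.sqrt (Glog (condCost p L) s
          - sInf ((fun s' => Glog (condCost p L) s') '' probVecs l)) :=
  log_bound_general_general (fun y' => condCost_mem_Icc hp0 hp1 (hL y')) hs hmax
end
end

section
/- Let l ≥ 1, Y = {−1,+1}^l, p a conditional label distribution on Y, L̄ : Y × Y → [0,1] a multi-label loss, and c_{y'} = ∑_{y∈Y} p(y)·L̄(y', y). For a centered score vector z on Y define the multi-label constrained hinge conditional error G(z) = ∑_{y'∈Y} c_{y'}·max(0, 1 + z_{y'}). If ĥ ∈ Y satisfies z_{ĥ} = max_{y'∈Y} z_{y'}, then c_{ĥ} − min_{y'∈Y} c_{y'} ≤ G(z) − inf_{z'} G(z'), where the infimum is over all centered score vectors z' on Y. -/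
noncomputable section
open Real

/-- The set of centered score vectors on `Y = {−1,+1}^l` (zero-sum constraint). -/
def centeredVecs (l : ℕ) : Set ((Fin l → Bool) → ℝ) :=
  {z | ∑ y', z y' = 0}

/-- Multi-label constrained hinge conditional error
`G(z) = ∑_{y'} c_{y'} max(0, 1 + z_{y'})`. -/
def GcstndHinge {l : ℕ} (c : (Fin l → Bool) → ℝ) (z : (Fin l → Bool) → ℝ) : ℝ :=
  ∑ y', c y' * max 0 (1 + z y')

/-!
Let `a` be the least cost and `n` the number of labels. Centered scores satisfy
`∑ i, max 0 (1 + z i) ≥ ∑ i, (1 + z i) = n`, so for `a ≥ 0` the error `∑ i, c i * max 0 (1 + z i)`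
exceeds `n * a` by at least `∑ i, (c i - a) * max 0 (1 + z i)`. Putting score `n - 1` on a cheapest
label and `-1` elsewhere attains `n * a`, so this sum bounds the regret from below. Its terms are
nonnegative, and the one at a label `k` with `z k ≥ 0` is at least `c k - a`; a maximizer of a
centered score vector is such a label.
-/

theorem condCost_nonneg {l : ℕ} {p : (Fin l → Bool) → ℝ}
    {L : (Fin l → Bool) → (Fin l → Bool) → ℝ} {y' : Fin l → Bool}
    (hp : ∀ y, 0 ≤ p y) (hL : ∀ y, 0 ≤ L y' y) : 0 ≤ condCost p L y' :=
  Finset.sum_nonneg fun y _ => mul_nonneg (hp y) (hL y)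

theorem nonneg_of_sum_nonneg_of_forall_le {ι M : Type*} [Fintype ι] [AddCommMonoid M]
    [LinearOrder M] [IsOrderedCancelAddMonoid M] {f : ι → M} {k : ι}
    (hf : 0 ≤ ∑ i, f i) (hk : ∀ i, f i ≤ f k) : 0 ≤ f k := by
  have hsum : ∑ _i : ι, (0 : M) ≤ ∑ i, f i := by simpa using hf
  obtain ⟨i, -, hi⟩ := Finset.exists_le_of_sum_le ⟨k, Finset.mem_univ k⟩ hsum
  exact hi.trans (hk i)

theorem sub_mul_hinge_nonneg {a b : ℝ} (hab : a ≤ b) (t : ℝ) : 0 ≤ (b - a) * max 0 (1 + t) :=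
  mul_nonneg (sub_nonneg.2 hab) (le_max_left _ _)

section ConstrainedHinge

variable {ι : Type*} [Fintype ι] {c z : ι → ℝ} {a : ℝ} {k m : ι}

/-- The constrained hinge conditional error of the scores `z` under the costs `c`, over an
arbitrary finite label type; at `ι = Fin l → Bool` it unfolds to `GcstndHinge`. -/
def constrainedHingeError (c z : ι → ℝ) : ℝ :=
  ∑ i, c i * max 0 (1 + z i)

/-- The centered score vector `card ι * e_m - 1`, which gives every label other than `m` zero hinge
loss; it minimizes the constrained hinge error when `m` has the least cost. -/
def concentratedScore [DecidableEq ι] (m : ι) : ι → ℝ :=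
  Pi.single m (Fintype.card ι : ℝ) - 1

theorem sum_concentratedScore [DecidableEq ι] (m : ι) : ∑ i, concentratedScore m i = 0 := by
  simp [concentratedScore]

theorem constrainedHingeError_concentratedScore [DecidableEq ι] (c : ι → ℝ) (m : ι) :
    constrainedHingeError c (concentratedScore m) = Fintype.card ι * c m := by
  have hinge_eq (i : ι) :
      max 0 (1 + concentratedScore m i) = if i = m then (Fintype.card ι : ℝ) else 0 := by
    by_cases hi : i = m <;> simp [concentratedScore, hi]
  simp [constrainedHingeError, hinge_eq, mul_comm]

theorem card_le_sum_hinge (hz : 0 ≤ ∑ i, z i) :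
    (Fintype.card ι : ℝ) ≤ ∑ i, max 0 (1 + z i) :=
  calc (Fintype.card ι : ℝ) ≤ ∑ i, (1 + z i) := by simpa [Finset.sum_add_distrib] using hz
    _ ≤ ∑ i, max 0 (1 + z i) := Finset.sum_le_sum fun _ _ => le_max_right _ _

theorem sum_sub_mul_hinge_le (ha : 0 ≤ a) (hz : 0 ≤ ∑ i, z i) :
    ∑ i, (c i - a) * max 0 (1 + z i) ≤ constrainedHingeError c z - Fintype.card ι * a :=
  calc ∑ i, (c i - a) * max 0 (1 + z i)
      = constrainedHingeError c z - (∑ i, max 0 (1 + z i)) * a := by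
        simp only [constrainedHingeError, sub_mul, Finset.sum_sub_distrib, Finset.sum_mul,
          mul_comm a]
    _ ≤ constrainedHingeError c z - Fintype.card ι * a := by
        gcongr
        exact card_le_sum_hinge hz

theorem isLeast_constrainedHingeError (hm₀ : 0 ≤ c m) (hm : ∀ i, c m ≤ c i) :
    IsLeast (constrainedHingeError c '' {z | ∑ i, z i = 0}) (Fintype.card ι * c m) := by
  classical
  refine ⟨⟨concentratedScore m, sum_concentratedScore m,
    constrainedHingeError_concentratedScore c m⟩, ?_⟩
  rintro _ ⟨z, hz, rfl⟩
  exact sub_nonneg.1 <| (Finset.sum_nonneg fun i _ => sub_mul_hinge_nonneg (hm i) (z i)).trans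
    (sum_sub_mul_hinge_le hm₀ hz.ge)

theorem sub_le_constrainedHingeError_sub (ha : 0 ≤ a) (hac : ∀ i, a ≤ c i)
    (hz : 0 ≤ ∑ i, z i) (hk : 0 ≤ z k) :
    c k - a ≤ constrainedHingeError c z - Fintype.card ι * a :=
  have one_le_hinge : 1 ≤ max 0 (1 + z k) := le_max_of_le_right (le_add_of_nonneg_right hk)
  calc c k - a ≤ (c k - a) * max 0 (1 + z k) :=
        le_mul_of_one_le_right (sub_nonneg.2 (hac k)) one_le_hinge
    _ ≤ ∑ i, (c i - a) * max 0 (1 + z i) :=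
        Finset.single_le_sum (f := fun i => (c i - a) * max 0 (1 + z i))
          (fun i _ => sub_mul_hinge_nonneg (hac i) (z i)) (Finset.mem_univ k)
    _ ≤ constrainedHingeError c z - Fintype.card ι * a := sum_sub_mul_hinge_le ha hz

theorem cstnd_bound_hinge_general (hc : ∀ i, 0 ≤ c i) (hz : ∑ i, z i = 0) (hk : 0 ≤ z k) :
    c k - ⨅ i, c i ≤ constrainedHingeError c z
      - sInf (constrainedHingeError c '' {z' | ∑ i, z' i = 0}) := by
  have : Nonempty ι := ⟨k⟩
  obtain ⟨m, hm⟩ := Finite.exists_min c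
  have iInf_eq : ⨅ i, c i = c m :=
    (ciInf_le (Set.finite_range c).bddBelow m).antisymm (le_ciInf hm)
  rw [iInf_eq, (isLeast_constrainedHingeError (hc m) hm).csInf_eq]
  exact sub_le_constrainedHingeError_sub (hc m) hm hz.ge hk

end ConstrainedHinge

theorem cstnd_bound_hinge (l : ℕ) (hl : 1 ≤ l)
    (p : (Fin l → Bool) → ℝ) (hp0 : ∀ y, 0 ≤ p y) (hp1 : ∑ y, p y = 1)
    (L : (Fin l → Bool) → (Fin l → Bool) → ℝ)
    (hL : ∀ y' y, L y' y ∈ Set.Icc (0 : ℝ) 1)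
    (z : (Fin l → Bool) → ℝ) (hz : z ∈ centeredVecs l)
    (hhat : Fin l → Bool) (hmax : ∀ y', z y' ≤ z hhat) :
    condCost p L hhat - ⨅ y' : Fin l → Bool, condCost p L y'
      ≤ GcstndHinge (condCost p L) z
          - sInf ((fun z' => GcstndHinge (condCost p L) z') '' centeredVecs l) :=
  cstnd_bound_hinge_general (fun y' => condCost_nonneg hp0 fun y => (hL y' y).1) hz
    (nonneg_of_sum_nonneg_of_forall_le hz.ge hmax)
end
end

section
/- For all real numbers a, b ∈ [0,1] with a + b ≤ 1 and every q ∈ (0,1): ( (a^{1/(1−q)} + b^{1/(1−q)}) / 2 )^{1−q} − (a + b)/2 ≥ (q/4)·(a − b)². -/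
/-
By homogeneity let `a = 1 + x` and `b = 1 - x`, and put `p = 1 / (1 - q)`. The numbers `a / 2` and
`b / 2` sum to one, so they can serve as weights in Jensen's inequality for `exp` at the points
`(p - 1) * log a` and `(p - 1) * log b`. This gives `exp ((p - 1) * H) ≤ (a ^ p + b ^ p) / 2` with
`H = (a * log a + b * log b) / 2`, and taking `p`-th roots bounds the power mean below by
`exp (q * H) ≥ 1 + q * H`. Finally `H ≥ x ^ 2 / 2`, because the derivative
`(log (1 + x) - log (1 - x)) / 2` of `H` is at least `x` for `x ≥ 0`.
-/

noncomputable section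
open Real

lemma mul_exp_sub_one_mul_log {z p : ℝ} (hz : 0 ≤ z) (hp : p ≠ 0) :
    z * exp ((p - 1) * log z) = z ^ p := by
  rcases hz.eq_or_lt with rfl | hz
  · rw [zero_mul, zero_rpow hp]
  · rw [mul_comm (p - 1), ← rpow_def_of_pos hz, rpow_sub_one hz.ne', mul_div_cancel₀ _ hz.ne']

section WeightedSums

variable {ι : Type*} {s : Finset ι} {w z : ι → ℝ} {p : ℝ}

lemma exp_mul_sum_mul_log_le_sum_mul_rpow (hw : ∀ i ∈ s, 0 ≤ w i) (hz : ∀ i ∈ s, 0 ≤ z i)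
    (hwz : ∑ i ∈ s, w i * z i = 1) (hp : p ≠ 0) :
    exp ((p - 1) * ∑ i ∈ s, w i * z i * log (z i)) ≤ ∑ i ∈ s, w i * z i ^ p := by
  calc exp ((p - 1) * ∑ i ∈ s, w i * z i * log (z i))
      = exp (∑ i ∈ s, w i * z i * ((p - 1) * log (z i))) := by
        rw [Finset.mul_sum]
        simp only [mul_left_comm (p - 1)]
    _ ≤ ∑ i ∈ s, w i * z i * exp ((p - 1) * log (z i)) :=
        convexOn_exp.map_sum_le (fun i hi => mul_nonneg (hw i hi) (hz i hi)) hwz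
          fun _ _ => Set.mem_univ _
    _ = ∑ i ∈ s, w i * z i ^ p :=
        Finset.sum_congr rfl fun i hi => by
          rw [mul_assoc, mul_exp_sub_one_mul_log (hz i hi) hp]

lemma one_add_mul_sum_mul_log_le_rpow_mean (hw : ∀ i ∈ s, 0 ≤ w i) (hz : ∀ i ∈ s, 0 ≤ z i)
    (hwz : ∑ i ∈ s, w i * z i = 1) (hp : 0 < p) :
    1 + (1 - 1 / p) * ∑ i ∈ s, w i * z i * log (z i) ≤ (∑ i ∈ s, w i * z i ^ p) ^ (1 / p) := by
  set H := ∑ i ∈ s, w i * z i * log (z i)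
  calc 1 + (1 - 1 / p) * H
      ≤ exp ((1 - 1 / p) * H) := by
        rw [add_comm]
        exact add_one_le_exp _
    _ = exp ((p - 1) * H) ^ (1 / p) := by
        rw [← exp_mul]
        congr 1
        field_simp
    _ ≤ (∑ i ∈ s, w i * z i ^ p) ^ (1 / p) := by
        gcongr
        exact exp_mul_sum_mul_log_le_sum_mul_rpow hw hz hwz hp.ne'

end WeightedSums

lemma two_mul_le_log_one_add_sub_log_one_sub {x : ℝ} (hx0 : 0 ≤ x) (hx1 : x < 1) :
    2 * x ≤ log (1 + x) - log (1 - x) := by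
  have hx : 0 < 1 - x := sub_pos.2 hx1
  calc 2 * x = 2 * (2 * x / (1 - x)) / (2 * x / (1 - x) + 2) := by
        field_simp
        ring
    _ ≤ log (1 + 2 * x / (1 - x)) := le_log_one_add_of_nonneg (by positivity)
    _ = log (1 + x) - log (1 - x) := by
        rw [← log_div (by positivity) hx.ne']
        congr 1
        field_simp
        ring

lemma hasDerivAt_one_add_mul_log_add_one_sub_mul_log {x : ℝ} (hx : 1 + x ≠ 0) (hx' : 1 - x ≠ 0) :
    HasDerivAt (fun y => (1 + y) * log (1 + y) + (1 - y) * log (1 - y))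
      (log (1 + x) - log (1 - x)) x := by
  have h₁ := (hasDerivAt_mul_log hx).comp x ((hasDerivAt_id x).const_add 1)
  have h₂ := (hasDerivAt_mul_log hx').comp x ((hasDerivAt_id x).const_sub 1)
  exact (h₁.add h₂).congr_deriv (by ring)

lemma sq_le_one_add_mul_log_add_one_sub_mul_log {x : ℝ} (hx : |x| ≤ 1) :
    x ^ 2 ≤ (1 + x) * log (1 + x) + (1 - x) * log (1 - x) := by
  wlog hx0 : 0 ≤ x generalizing x
  · have h := this (x := -x) (by rwa [abs_neg]) (by linarith)
    rwa [neg_sq, sub_neg_eq_add, ← sub_eq_add_neg, add_comm] at h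
  have hmono : MonotoneOn (fun y => (1 + y) * log (1 + y) + (1 - y) * log (1 - y) - y ^ 2)
      (Set.Icc 0 1) := by
    refine monotoneOn_of_hasDerivWithinAt_nonneg (convex_Icc 0 1)
      (f' := fun y => log (1 + y) - log (1 - y) - 2 * y) ?_ ?_ ?_
    · have h₁ : Continuous fun y : ℝ => (1 + y) * log (1 + y) :=
        continuous_mul_log.comp (continuous_const.add continuous_id)
      have h₂ : Continuous fun y : ℝ => (1 - y) * log (1 - y) :=
        continuous_mul_log.comp (continuous_const.sub continuous_id)
      exact ((h₁.add h₂).sub (continuous_pow 2)).continuousOn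
    · rw [interior_Icc]
      rintro y ⟨hy0, hy1⟩
      have h := hasDerivAt_one_add_mul_log_add_one_sub_mul_log
        (show 1 + y ≠ 0 by positivity) (sub_pos.2 hy1).ne'
      exact ((h.sub (hasDerivAt_pow 2 y)).congr_deriv (by norm_num)).hasDerivWithinAt
    · rw [interior_Icc]
      rintro y ⟨hy0, hy1⟩
      exact sub_nonneg.2 (two_mul_le_log_one_add_sub_log_one_sub hy0.le hy1)
  have h := hmono (Set.left_mem_Icc.2 zero_le_one) ⟨hx0, (abs_le.1 hx).2⟩ hx0
  simpa using h

lemma one_add_mul_sq_le_rpow_mean {p x : ℝ} (hp : 1 ≤ p) (hx : |x| ≤ 1) :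
    1 + (1 - 1 / p) / 2 * x ^ 2 ≤ (((1 + x) ^ p + (1 - x) ^ p) / 2) ^ (1 / p) := by
  obtain ⟨hx₁, hx₂⟩ := abs_le.1 hx
  have hp' : 0 ≤ 1 - 1 / p := sub_nonneg.2 ((div_le_one (by positivity)).2 hp)
  have hmean := one_add_mul_sum_mul_log_le_rpow_mean (s := Finset.univ) (p := p)
    (w := fun _ => 1 / 2) (z := ![1 + x, 1 - x]) (fun _ _ => by norm_num)
    (by simp [Fin.forall_fin_two, neg_le_iff_add_nonneg'.1 hx₁, hx₂])
    (by norm_num [Fin.sum_univ_two, ← mul_add])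
    (by positivity)
  simp only [Fin.sum_univ_two, Matrix.cons_val_zero, Matrix.cons_val_one] at hmean
  calc 1 + (1 - 1 / p) / 2 * x ^ 2
      ≤ 1 + (1 - 1 / p) / 2 * ((1 + x) * log (1 + x) + (1 - x) * log (1 - x)) := by
        gcongr
        exact sq_le_one_add_mul_log_add_one_sub_mul_log hx
    _ = 1 + (1 - 1 / p) * (1 / 2 * (1 + x) * log (1 + x) + 1 / 2 * (1 - x) * log (1 - x)) := by
        ring
    _ ≤ (1 / 2 * (1 + x) ^ p + 1 / 2 * (1 - x) ^ p) ^ (1 / p) := hmean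
    _ = (((1 + x) ^ p + (1 - x) ^ p) / 2) ^ (1 / p) := by
        congr 1
        ring

lemma rpow_mean_mul_left {c u v p : ℝ} (hc : 0 ≤ c) (hu : 0 ≤ u) (hv : 0 ≤ v) (hp : p ≠ 0) :
    (((c * u) ^ p + (c * v) ^ p) / 2) ^ (1 / p) = c * ((u ^ p + v ^ p) / 2) ^ (1 / p) := by
  rw [mul_rpow hc hu, mul_rpow hc hv, ← mul_add, mul_div_assoc,
    mul_rpow (by positivity) (by positivity), one_div, rpow_rpow_inv hc hp]

lemma half_add_le_rpow_mean {a b p : ℝ} (ha : 0 ≤ a) (hb : 0 ≤ b) (hp : 1 ≤ p) :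
    (a + b) / 2 ≤ ((a ^ p + b ^ p) / 2) ^ (1 / p) := by
  have h := arith_mean_le_rpow_mean Finset.univ (fun _ : Fin 2 => 1 / 2) ![a, b]
    (fun _ _ => by norm_num) (by norm_num) (by simp [Fin.forall_fin_two, ha, hb]) hp
  simp only [Fin.sum_univ_two, Matrix.cons_val_zero, Matrix.cons_val_one, ← mul_add] at h
  rwa [one_div_mul_eq_div, one_div_mul_eq_div] at h

lemma exists_eq_mul_one_add_eq_mul_one_sub {a b : ℝ} (ha : 0 ≤ a) (hb : 0 ≤ b) :
    ∃ c x : ℝ, 0 ≤ c ∧ |x| ≤ 1 ∧ a = c * (1 + x) ∧ b = c * (1 - x) := by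
  rcases (add_nonneg ha hb).eq_or_lt with hab | hab
  · obtain ⟨rfl, rfl⟩ := (add_eq_zero_iff_of_nonneg ha hb).1 hab.symm
    exact ⟨0, 0, by simp⟩
  · refine ⟨(a + b) / 2, (a - b) / (a + b), by positivity, ?_, ?_, ?_⟩
    · rw [abs_div, abs_of_pos hab, div_le_one hab, abs_le]
      constructor <;> linarith
    · field_simp
      ring
    · field_simp
      ring

lemma mul_sq_sub_le_add_mul_rpow_mean_sub {a b p : ℝ} (ha : 0 ≤ a) (hb : 0 ≤ b) (hp : 1 ≤ p) :
    (1 - 1 / p) / 4 * (a - b) ^ 2 ≤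
      (a + b) * (((a ^ p + b ^ p) / 2) ^ (1 / p) - (a + b) / 2) := by
  obtain ⟨c, x, hc, hx, rfl, rfl⟩ := exists_eq_mul_one_add_eq_mul_one_sub ha hb
  obtain ⟨hx₁, hx₂⟩ := abs_le.1 hx
  rw [rpow_mean_mul_left hc (by linarith) (by linarith) (by positivity)]
  set M := (((1 + x) ^ p + (1 - x) ^ p) / 2) ^ (1 / p)
  have hM : 1 + (1 - 1 / p) / 2 * x ^ 2 ≤ M := one_add_mul_sq_le_rpow_mean hp hx
  calc (1 - 1 / p) / 4 * (c * (1 + x) - c * (1 - x)) ^ 2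
      = 2 * c ^ 2 * ((1 - 1 / p) / 2 * x ^ 2) := by ring
    _ ≤ 2 * c ^ 2 * (M - 1) := by
        gcongr
        exact le_sub_iff_add_le'.2 hM
    _ = (c * (1 + x) + c * (1 - x)) * (c * M - (c * (1 + x) + c * (1 - x)) / 2) := by ring

lemma one_le_one_div_one_sub {q : ℝ} (hq : q ∈ Set.Ico (0 : ℝ) 1) : 1 ≤ 1 / (1 - q) :=
  one_le_one_div (sub_pos.2 hq.2) (sub_le_self 1 hq.1)

theorem power_mean_inequality_general {a b q : ℝ} (ha : 0 ≤ a) (hb : 0 ≤ b)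
    (hq : q ∈ Set.Ico (0 : ℝ) 1) :
    q / 4 * (a - b) ^ 2 ≤
      (a + b) * (((a ^ (1 / (1 - q)) + b ^ (1 / (1 - q))) / 2) ^ (1 - q) - (a + b) / 2) := by
  simpa only [one_div_one_div, sub_sub_cancel] using
    mul_sq_sub_le_add_mul_rpow_mean_sub ha hb (one_le_one_div_one_sub hq)

theorem power_mean_inequality (a b q : ℝ) (ha : a ∈ Set.Icc (0 : ℝ) 1)
    (hb : b ∈ Set.Icc (0 : ℝ) 1) (hab : a + b ≤ 1) (hq : q ∈ Set.Ioo (0 : ℝ) 1) :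
    ((a ^ (1 / (1 - q)) + b ^ (1 / (1 - q))) / 2) ^ (1 - q) - (a + b) / 2
      ≥ (q / 4) * (a - b) ^ 2 := by
  have hq' := Set.Ioo_subset_Ico_self hq
  refine (power_mean_inequality_general ha.1 hb.1 hq').trans
    (mul_le_of_le_one_left (sub_nonneg.2 ?_) hab)
  simpa only [one_div_one_div] using
    half_add_le_rpow_mean ha.1 hb.1 (one_le_one_div_one_sub hq')
end
end
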